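/- arXiv:2011.04022 — 2 statements merged into one kernel-verified Lean document; each statement's English description precedes it below -/
import Mathlib

section
/- Let I=(G,ω,𝒫,≺) be a feasible HCPP(l) instance with classes E_1 ≺ … ≺ E_k, let α ≥ 1, and suppose that for every u,v,i for which R[u,v,i] has a solution we are given a feasible solution P̃[u,v,i] of R[u,v,i] with ω(P̃[u,v,i]) ≤ α·ω(P[u,v,i]). Let Γ̃ be the layer graph whose arc (u_i,v_{i+1}) has weight ω(P̃[u,v,i]). Then Γ̃ contains a layer path, and for any least-weight layer path J of Γ̃, the solution W_J obtained by concatenating the walks P̃[·,·,i] along J is a feasible solution for I with ω(W_J) ≤ α·ω(W*), where W* is an optimal solution for I. -/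
namespace HCPPFormal

variable {V : Type} [DecidableEq V]

/-- The degree of a vertex in a multigraph given as a multiset of edges
(loops count twice, multiplicities are counted). -/
def mDeg (M : Multiset (Sym2 V)) (v : V) : ℕ :=
  (M.map fun e => if e = Sym2.diag v then 2 else if v ∈ e then 1 else 0).sum

/-- The vertex set of the multigraph induced by a multiset of edges. -/
def mVerts (M : Multiset (Sym2 V)) : Set V := {v | ∃ e ∈ M, v ∈ e}

/-- Adjacency in the multigraph induced by a multiset of edges. -/
def mAdj (M : Multiset (Sym2 V)) (a b : V) : Prop := s(a, b) ∈ M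

/-- The multigraph induced by a multiset of edges is connected. -/
def mConnected (M : Multiset (Sym2 V)) : Prop :=
  ∀ u ∈ mVerts M, ∀ v ∈ mVerts M, Relation.ReflTransGen (mAdj M) u v

/-- The list of edges traversed by a walk, given as its list of vertices. -/
def walkEdgeList (w : List V) : List (Sym2 V) :=
  (w.zip w.tail).map fun p => s(p.1, p.2)

/-- The multiset of edges traversed by a walk (with multiplicities). -/
def walkEdges (w : List V) : Multiset (Sym2 V) :=
  (walkEdgeList w : Multiset (Sym2 V))

/-- The weight of a multiset of edges. -/
def mWeight (ω : Sym2 V → ℕ) (M : Multiset (Sym2 V)) : ℕ := (M.map ω).sum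

/-- The weight of a walk. -/
def wWeight (ω : Sym2 V → ℕ) (w : List V) : ℕ := mWeight ω (walkEdges w)

/-- A multiset `M` of edges is a perfect matching on the vertex set `U`:
it is a set of pairwise vertex-disjoint non-loop edges
whose endpoints are exactly the vertices of `U`. -/
def IsPerfectMatchingOn (M : Multiset (Sym2 V)) (U : Set V) : Prop :=
  M.Nodup ∧ (∀ e ∈ M, ¬ e.IsDiag) ∧
  (∀ e ∈ M, ∀ e' ∈ M, e ≠ e' → ∀ v : V, v ∈ e → v ∉ e') ∧
  mVerts M = U


/-- An HCPP(l) instance: an undirected graph on the vertex type `V` given by the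
partition of its edge set into `k ≥ 1` nonempty classes `cls 0 ≺ cls 1 ≺ … ≺ cls (k-1)`,
linearly ordered by their indices. -/
structure HCPPl (V : Type) [DecidableEq V] : Type where
  k : ℕ
  hk : 1 ≤ k
  cls : ℕ → Finset (Sym2 V)
  nonempty : ∀ i < k, (cls i).Nonempty
  disj : ∀ i < k, ∀ j < k, i ≠ j → Disjoint (cls i) (cls j)
  nodiag : ∀ i < k, ∀ e ∈ cls i, ¬ e.IsDiag

variable (I : HCPPl V)

/-- The edge set `E = E_1 ∪ … ∪ E_k` of the instance. -/
def edgesOf : Finset (Sym2 V) := (Finset.range I.k).biUnion I.cls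

/-- The edge set `E_1 ∪ … ∪ E_{i+1}` of the first `i+1` classes (0-based index `i`). -/
def upTo (i : ℕ) : Finset (Sym2 V) := (Finset.range (i + 1)).biUnion I.cls

/-- A feasible solution for the HCPP(l) instance `I`: a closed walk in `G`
traversing each edge at least once such that each edge of a class is traversed
only after all edges of all earlier classes have been traversed. -/
def Feasible (T : List V) : Prop :=
  T ≠ [] ∧ T.Chain' (fun a b => s(a, b) ∈ edgesOf I) ∧ T.head? = T.getLast? ∧
  (∀ e ∈ edgesOf I, e ∈ walkEdges T) ∧
  ∀ (q : ℕ) (hq : q < (walkEdgeList T).length) (i : ℕ), i < I.k →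
    (walkEdgeList T).get ⟨q, hq⟩ ∈ I.cls i →
    ∀ j < i, ∀ e ∈ I.cls j,
      ∃ (p : ℕ) (hp : p < (walkEdgeList T).length),
        p < q ∧ (walkEdgeList T).get ⟨p, hp⟩ = e

/-- A solution of the problem `R[u,v,i]`: a walk from `u` to `v` in
`⟨G⟩(E_1 ∪ … ∪ E_{i+1})` traversing all edges of the class `cls i` (0-based `i`). -/
def RSol (u v : V) (i : ℕ) (w : List V) : Prop :=
  w ≠ [] ∧ w.Chain' (fun a b => s(a, b) ∈ upTo I i) ∧
  w.head? = some u ∧ w.getLast? = some v ∧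
  ∀ e ∈ I.cls i, e ∈ walkEdges w

/-- The problem `R[u,v,i]` has a solution. -/
def RFeas (u v : V) (i : ℕ) : Prop := ∃ w, RSol I u v i w

/-- The optimal weight of a solution of `R[u,v,i]`,
i.e. the weight `ω(P[u,v,i])` of the arc `(u_i, v_{i+1})` of the layer graph `Γ`. -/
noncomputable def optR (ω : Sym2 V → ℕ) (u v : V) (i : ℕ) : ℕ :=
  sInf {c : ℕ | ∃ w, RSol I u v i w ∧ wWeight ω w = c}

/-- The vertices incident to the edges of `F`. -/
def vertsOf (F : Finset (Sym2 V)) : Set V := {v | ∃ e ∈ F, v ∈ e}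

/-- A layer path in the layer graph `Γ`, encoded by the vertices `y 0, …, y I.k` of `G`
of which its vertices are copies: it leads from a vertex `v_1 ∈ V_1` to the copy
`v_{k+1} ∈ V_{k+1}` of the same vertex of `V(E_1)`, its `i`-th vertex lies in the
layer `V_i`, and all its arcs are present in `Γ` (0-based layers `0, …, I.k`). -/
def IsLayerPath (y : ℕ → V) : Prop :=
  y 0 = y I.k ∧ y 0 ∈ vertsOf (I.cls 0) ∧
  (∀ i : ℕ, 0 < i → i < I.k →
    y i ∈ vertsOf (I.cls i) ∧ ∃ j < i, y i ∈ vertsOf (I.cls j)) ∧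
  ∀ i < I.k, RFeas I (y i) (y (i + 1)) i

/-- The weight of a layer path in the layer graph `Γ`. -/
noncomputable def lpWeight (ω : Sym2 V → ℕ) (y : ℕ → V) : ℕ :=
  ∑ i ∈ Finset.range I.k, optR I ω (y i) (y (i + 1)) i

/-- Concatenation of a list of walks, gluing the last vertex of each walk to the
(coinciding) first vertex of the next one. -/
def concatWalks : List (List V) → List V
  | [] => []
  | w :: ws => w ++ (concatWalks ws).tail

/-- The closed walk `W_J` obtained by concatenating the walks `P (y i) (y (i+1)) i`
along the layer path given by `y`. -/
def WJ (P : V → V → ℕ → List V) (y : ℕ → V) : List V :=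
  concatWalks ((List.range I.k).map fun i => P (y i) (y (i + 1)) i)

/-- The weight of the layer path given by `y` in the layer graph `Γ̃` whose arc
`(u_i, v_{i+1})` is weighted by the weight of the given walk `Pt u v i`. -/
def lpWeightApx (ω : Sym2 V → ℕ) (Pt : V → V → ℕ → List V) (y : ℕ → V) : ℕ :=
  ∑ i ∈ Finset.range I.k, wWeight ω (Pt (y i) (y (i + 1)) i)

theorem wel_cons_cons {V : Type} [DecidableEq V] (a b : V) (l : List V) :
    walkEdgeList (a :: b :: l) = s(a, b) :: walkEdgeList (b :: l) := by
  simp [walkEdgeList]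

theorem wel_length {V : Type} [DecidableEq V] (w : List V) :
    (walkEdgeList w).length = w.length - 1 := by
  simp [walkEdgeList]

theorem wel_getElem {V : Type} [DecidableEq V] (w : List V) (q : ℕ) (h : q + 1 < w.length) :
    (walkEdgeList w)[q]? = some s(w[q], w[q + 1]) := by
  have h1 : q < (walkEdgeList w).length := by rw [wel_length]; omega
  rw [List.getElem?_eq_getElem h1]
  simp [walkEdgeList]

theorem wel_append {V : Type} [DecidableEq V] (w w' : List V) (u : V)
    (h : w.getLast? = some u) (h' : w'.head? = some u) :
    walkEdgeList (w ++ w'.tail) = walkEdgeList w ++ walkEdgeList w' := by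
  induction w with
  | nil => simp at h
  | cons a l ih =>
    cases l with
    | nil =>
      cases w' with
      | nil => simp at h'
      | cons b l' =>
        simp at h h'
        subst h; subst h'
        simp [walkEdgeList]
    | cons b l =>
      have := ih (by simpa using h)
      simp only [List.cons_append, wel_cons_cons] at this ⊢
      rw [this]

theorem chain_iff {V : Type} [DecidableEq V] (S : Finset (Sym2 V)) (w : List V) :
    List.IsChain (fun a b => s(a, b) ∈ S) w ↔ ∀ e ∈ walkEdgeList w, e ∈ S := by
  induction w with
  | nil => simp [walkEdgeList]
  | cons a l ih =>
    cases l with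
    | nil => simp [walkEdgeList]
    | cons b l =>
      rw [wel_cons_cons, List.isChain_cons_cons, ih]
      simp

theorem wel_seg {V : Type} [DecidableEq V] (w : List V) (a b : ℕ) :
    walkEdgeList ((w.drop a).take (b - a + 1)) = ((walkEdgeList w).drop a).take (b - a) := by
  apply List.ext_getElem?
  intro q
  by_cases h : q < b - a ∧ a + q + 1 < w.length
  · rw [wel_getElem _ _ (by simp; omega)]
    rw [List.getElem?_take, if_pos h.1, List.getElem?_drop, wel_getElem _ _ h.2]
    simp [Nat.add_assoc]
  · rw [List.getElem?_eq_none, List.getElem?_eq_none]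
    · simp [wel_length]; omega
    · simp [wel_length]; omega

theorem wWeight_eq {V : Type} [DecidableEq V] (ω : Sym2 V → ℕ) (w : List V) :
    wWeight ω w = ((walkEdgeList w).map ω).sum := by
  simp [wWeight, mWeight, walkEdges]

/-- Properties of a concatenation of consecutive walks. -/
theorem concat_props {V : Type} [DecidableEq V] (f : ℕ → List V) (y : ℕ → V) (m : ℕ) :
    ∀ n, (∀ i, n ≤ i → i < n + m + 1 → (f i).head? = some (y i) ∧
      (f i).getLast? = some (y (i + 1))) →
    (concatWalks ((List.range' n (m + 1)).map f)).head? = some (y n) ∧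
    (concatWalks ((List.range' n (m + 1)).map f)).getLast? = some (y (n + m + 1)) ∧
    walkEdgeList (concatWalks ((List.range' n (m + 1)).map f)) =
      ((List.range' n (m + 1)).map fun i => walkEdgeList (f i)).flatten := by
  induction m with
  | zero =>
    intro n h
    have := h n le_rfl (by omega)
    simp [concatWalks, this]
  | succ m ih =>
    intro n h
    obtain ⟨h1, h2, h3⟩ := ih (n + 1) (fun i hi hi' => h i (by omega) (by omega))
    have h0 := h n le_rfl (by omega)
    rw [List.range'_succ]
    simp only [List.map_cons, concatWalks, List.flatten_cons]
    set C := concatWalks ((List.range' (n + 1) (m + 1)).map f) with hC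
    refine ⟨?_, ?_, ?_⟩
    · simp [List.head?_append, h0]
    · rw [List.getLast?_append]
      cases hc : C with
      | nil => simp [hc] at h1
      | cons a l =>
        cases l with
        | nil =>
          simp [hc] at h1 h2
          simp [h0]
          rw [← h1, h2]; congr 1; omega
        | cons b l =>
          rw [hc] at h2
          have h2' : (b :: l).getLast? = some (y (n + 1 + m + 1)) := by
            rw [← h2]; simp
          simp only [List.tail_cons, h2']
          simp; congr 1; omega
    · rw [wel_append _ _ _ h0.2 h1, h3]

theorem mem_upTo {V : Type} [DecidableEq V] (I : HCPPl V) (i : ℕ) (e : Sym2 V) :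
    e ∈ upTo I i ↔ ∃ c ≤ i, e ∈ I.cls c := by
  simp [upTo]

theorem mem_edgesOf {V : Type} [DecidableEq V] (I : HCPPl V) (e : Sym2 V) :
    e ∈ edgesOf I ↔ ∃ c < I.k, e ∈ I.cls c := by
  simp [edgesOf]

theorem cls_unique {V : Type} [DecidableEq V] (I : HCPPl V) {i j : ℕ} {e : Sym2 V}
    (hi : i < I.k) (hj : j < I.k) (h1 : e ∈ I.cls i) (h2 : e ∈ I.cls j) : i = j := by
  by_contra hne
  exact (Finset.disjoint_left.mp (I.disj i hi j hj hne)) h1 h2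

/-- The order condition for a concatenation of edge lists. -/
theorem order_flatten {V : Type} [DecidableEq V] (I : HCPPl V) (g : ℕ → List (Sym2 V))
    (hup : ∀ i < I.k, ∀ e ∈ g i, e ∈ upTo I i)
    (hcov : ∀ i < I.k, ∀ e ∈ I.cls i, e ∈ g i) (n : ℕ) (hn : n ≤ I.k) :
    ∀ (q : ℕ) (x : Sym2 V) (i : ℕ), i < I.k → (((List.range n).map g).flatten)[q]? = some x → x ∈ I.cls i →
      ∀ j < i, ∀ e ∈ I.cls j, ∃ p < q, (((List.range n).map g).flatten)[p]? = some e := by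
  induction n with
  | zero => intro q x i hi h; simp at h
  | succ n ih =>
    intro q x i hi hx hxi j hj e he
    have hL : ((List.range (n + 1)).map g).flatten = ((List.range n).map g).flatten ++ g n := by
      simp [List.range_succ]
    rw [hL] at hx ⊢
    set L := ((List.range n).map g).flatten with hLdef
    by_cases hq : q < L.length
    · rw [List.getElem?_append_left hq] at hx
      obtain ⟨p, hp, hpe⟩ := ih (by omega) q x i hi hx hxi j hj e he
      refine ⟨p, hp, ?_⟩
      rw [List.getElem?_append_left (by omega)]
      exact hpe
    · rw [List.getElem?_append_right (by omega)] at hx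
      have hxg : x ∈ g n := List.mem_of_getElem? hx
      obtain ⟨c, hc, hxc⟩ := (mem_upTo I n x).1 (hup n (by omega) x hxg)
      have hic := cls_unique I hi (by omega) hxi hxc
      have heL : e ∈ L := by
        rw [hLdef, List.mem_flatten]
        exact ⟨g j, List.mem_map.2 ⟨j, by simp; omega, rfl⟩, hcov j (by omega) e he⟩
      obtain ⟨p, hp, hpe⟩ := List.mem_iff_getElem.1 heL
      refine ⟨p, by omega, ?_⟩
      rw [List.getElem?_append_left hp, List.getElem?_eq_getElem hp, hpe]

/-- Weight of consecutive segments. -/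
theorem sum_segments {E : Type} (ω : E → ℕ) (L : List E) (t : ℕ → ℕ) (n : ℕ) (h0 : t 0 = 0)
    (hmono : ∀ i < n, t i ≤ t (i + 1)) :
    ∑ i ∈ Finset.range n, (((L.drop (t i)).take (t (i + 1) - t i)).map ω).sum =
      ((L.take (t n)).map ω).sum := by
  induction n with
  | zero => simp [h0]
  | succ n ih =>
    rw [Finset.sum_range_succ, ih (fun i hi => hmono i (by omega))]
    have h1 : t (n + 1) = t n + (t (n + 1) - t n) := by have := hmono n (by omega); omega
    conv_rhs => rw [h1, List.take_add]
    simp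

theorem concat_feasible {V : Type} [DecidableEq V] (I : HCPPl V) (ω : Sym2 V → ℕ)
    (Pt : V → V → ℕ → List V) (y : ℕ → V) (hy : y 0 = y I.k)
    (hR : ∀ i < I.k, RSol I (y i) (y (i + 1)) i (Pt (y i) (y (i + 1)) i)) :
    Feasible I (WJ I Pt y) ∧ wWeight ω (WJ I Pt y) = lpWeightApx I ω Pt y := by
  have hk := I.hk
  obtain ⟨h1, h2, h3⟩ := concat_props (fun i => Pt (y i) (y (i + 1)) i) y (I.k - 1) 0
    (fun i _ hi => ⟨(hR i (by omega)).2.2.1, (hR i (by omega)).2.2.2.1⟩)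
  rw [show I.k - 1 + 1 = I.k by omega, ← List.range_eq_range'] at h1 h2 h3
  rw [show 0 + (I.k - 1) + 1 = I.k by omega] at h2
  change (WJ I Pt y).head? = _ at h1
  change (WJ I Pt y).getLast? = _ at h2
  change walkEdgeList (WJ I Pt y) = _ at h3
  have hup : ∀ i < I.k, ∀ e ∈ walkEdgeList (Pt (y i) (y (i + 1)) i), e ∈ upTo I i :=
    fun i hi => (chain_iff _ _).1 (hR i hi).2.1
  have hcov : ∀ i < I.k, ∀ e ∈ I.cls i, e ∈ walkEdgeList (Pt (y i) (y (i + 1)) i) := by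
    intro i hi e he
    simpa [walkEdges] using (hR i hi).2.2.2.2 e he
  refine ⟨⟨?_, ?_, ?_, ?_, ?_⟩, ?_⟩
  · intro h; simp [h] at h1
  · refine (chain_iff _ _).2 ?_
    rw [h3]
    intro e he
    simp only [List.mem_flatten, List.mem_map, List.mem_range] at he
    obtain ⟨l, ⟨i, hi, rfl⟩, he⟩ := he
    obtain ⟨c, hc, hec⟩ := (mem_upTo I i e).1 (hup i hi e he)
    exact (mem_edgesOf I e).2 ⟨c, by omega, hec⟩
  · rw [h1, h2, hy]
  · intro e he
    obtain ⟨c, hc, hec⟩ := (mem_edgesOf I e).1 he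
    simp only [walkEdges, Multiset.mem_coe, h3, List.mem_flatten, List.mem_map, List.mem_range]
    exact ⟨_, ⟨c, hc, rfl⟩, hcov c hc e hec⟩
  · intro q hq i hi hx j hj e he
    obtain ⟨p, hp, hpe⟩ := order_flatten I (fun i => walkEdgeList (Pt (y i) (y (i + 1)) i))
      hup hcov I.k le_rfl q _ i hi (by rw [← h3]; exact List.getElem?_eq_getElem hq) hx j hj e he
    rw [← h3] at hpe
    obtain ⟨hp', hpe'⟩ := List.getElem?_eq_some_iff.1 hpe
    exact ⟨p, hp', hp, hpe'⟩
  · rw [wWeight_eq, h3]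
    simp only [lpWeightApx, wWeight_eq]
    generalize I.k = n
    induction n with
    | zero => simp
    | succ n ih => 
      rw [Finset.sum_range_succ, ← ih, List.range_succ]
      simp

/-- A feasible solution decomposes along a layer path. -/
theorem decompose {V : Type} [DecidableEq V] (I : HCPPl V) (ω : Sym2 V → ℕ) (W : List V)
    (hW : Feasible I W) :
    ∃ (y : ℕ → V) (s : ℕ → List V), IsLayerPath I y ∧
      (∀ i < I.k, RSol I (y i) (y (i + 1)) i (s i)) ∧
      ∑ i ∈ Finset.range I.k, wWeight ω (s i) = wWeight ω W := by
  classical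
  have hk := I.hk
  obtain ⟨hne, hch, hcl, hall, hord⟩ := hW
  have hch := (chain_iff _ _).1 hch
  have hlen := wel_length W
  have hWpos : 0 < W.length := List.length_pos_iff.2 hne
  set E := walkEdgeList W with hE
  have hall : ∀ i < I.k, ∀ e ∈ I.cls i, e ∈ E := by
    intro i hi e he
    simpa [walkEdges] using hall e ((mem_edgesOf I e).2 ⟨i, hi, he⟩)
  have hord : ∀ (q : ℕ) (x : Sym2 V) (i : ℕ), i < I.k → E[q]? = some x → x ∈ I.cls i → ∀ j < i, ∀ e ∈ I.cls j,
      ∃ p < q, E[p]? = some e := by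
    intro q x i hi hx hxi j hj e he
    obtain ⟨hq, rfl⟩ := List.getElem?_eq_some_iff.1 hx
    obtain ⟨p, hp, hpq, hpe⟩ := hord q hq i hi hxi j hj e he
    exact ⟨p, hpq, List.getElem?_eq_some_iff.2 ⟨hp, hpe⟩⟩
  have hex : ∀ i < I.k, ∃ q : ℕ, ∃ x, E[q]? = some x ∧ x ∈ I.cls i := by
    intro i hi
    obtain ⟨e, he⟩ := I.nonempty i hi
    obtain ⟨q, hq⟩ := List.mem_iff_getElem?.1 (hall i hi e he)
    exact ⟨q, e, hq, he⟩
  -- first occurrences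
  have hfirst : ∀ i : ℕ, ∃ q : ℕ, (i < I.k → (∃ x, E[q]? = some x ∧ x ∈ I.cls i) ∧
      ∀ p < q, ∀ x, E[p]? = some x → x ∉ I.cls i) ∧ (¬ i < I.k → q = E.length) := by
    intro i
    by_cases hi : i < I.k
    · refine ⟨Nat.find (hex i hi), fun _ => ⟨Nat.find_spec (hex i hi), ?_⟩, fun h => absurd hi h⟩
      intro p hp x hx hxi
      exact Nat.find_min (hex i hi) hp ⟨x, hx, hxi⟩
    · exact ⟨E.length, fun h => absurd h hi, fun _ => rfl⟩
  choose t ht ht' using hfirst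
  have htk : t I.k = E.length := ht' _ (lt_irrefl _)
  have htlt : ∀ i < I.k, t i < E.length := by
    intro i hi
    obtain ⟨⟨x, hx, _⟩, _⟩ := ht i hi
    exact (List.getElem?_eq_some_iff.1 hx).1
  -- edges strictly before the first occurrence of class `i` have smaller class
  have hbefore : ∀ i ≤ I.k, ∀ p < t i, ∀ x, E[p]? = some x → ∃ c < i, x ∈ I.cls c := by
    intro i hi p hp x hx
    obtain ⟨c, hc, hxc⟩ := (mem_edgesOf I x).1 (hch x (List.mem_of_getElem? hx))
    refine ⟨c, ?_, hxc⟩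
    by_contra hci
    have hik : i < I.k := by omega
    rcases Nat.lt_or_ge i c with h | h
    · obtain ⟨e, he⟩ := I.nonempty i hik
      obtain ⟨r, hr, hre⟩ := hord p x c hc hx hxc i h e he
      exact (ht i hik).2 r (by omega) e hre he
    · have : c = i := by omega
      subst this
      exact (ht c hik).2 p hp x hx hxc
  have ht0 : t 0 = 0 := by
    by_contra h
    have h0 := htlt 0 (by omega)
    obtain ⟨c, hc, _⟩ := hbefore 0 (by omega) 0 (by omega) (E[0]) 
      (List.getElem?_eq_getElem (by omega))
    omega
  -- all edges of class `i` occur between `t i` and `t (i+1)`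
  have hbetween : ∀ i < I.k, ∀ e ∈ I.cls i, ∃ p, t i ≤ p ∧ p < t (i + 1) ∧ E[p]? = some e := by
    intro i hi e he
    have : ∃ p < t (i + 1), E[p]? = some e := by
      by_cases hi' : i + 1 < I.k
      · obtain ⟨⟨x, hx, hxi⟩, _⟩ := ht (i + 1) hi'
        exact hord _ x (i + 1) hi' hx hxi i (by omega) e he
      · have h1 : i + 1 = I.k := by omega
        obtain ⟨q, hq⟩ := List.mem_iff_getElem?.1 (hall i hi e he)
        refine ⟨q, ?_, hq⟩
        rw [h1, htk]
        exact (List.getElem?_eq_some_iff.1 hq).1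
    obtain ⟨p, hp, hpe⟩ := this
    refine ⟨p, ?_, hp, hpe⟩
    by_contra hlt
    exact (ht i hi).2 p (by omega) e hpe he
  have hmono : ∀ i < I.k, t i < t (i + 1) := by
    intro i hi
    obtain ⟨e, he⟩ := I.nonempty i hi
    obtain ⟨p, h1, h2, _⟩ := hbetween i hi e he
    omega
  have htle : ∀ i ≤ I.k, t i < W.length := by
    intro i hi
    rcases Nat.lt_or_eq_of_le hi with h | h
    · have := htlt i h; omega
    · rw [h, htk]; omega
  set v0 := W[0] with hv0
  let y : ℕ → V := fun i => W.getD (t i) v0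
  have hyi : ∀ i (hi : i ≤ I.k), y i = W[t i]'(htle i hi) := by
    intro i hi
    simp [y, htle i hi]
  let s : ℕ → List V := fun i => (W.drop (t i)).take (t (i + 1) - t i + 1)
  have hsE : ∀ i, walkEdgeList (s i) = (E.drop (t i)).take (t (i + 1) - t i) :=
    fun i => wel_seg W (t i) (t (i + 1))
  have hsR : ∀ i < I.k, RSol I (y i) (y (i + 1)) i (s i) := by
    intro i hi
    have hm := hmono i hi
    have hl := htle (i + 1) (by omega)
    have hslen : (s i).length = t (i + 1) - t i + 1 := by simp [s]; omega
    refine ⟨?_, ?_, ?_, ?_, ?_⟩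
    · intro h; simp [h] at hslen
    · refine (chain_iff _ _).2 ?_
      rw [hsE]
      intro e he
      obtain ⟨q, hq⟩ := List.mem_iff_getElem?.1 he
      rw [List.getElem?_take] at hq
      split_ifs at hq with hq'
      rw [List.getElem?_drop] at hq
      obtain ⟨c, hc, hec⟩ := hbefore (i + 1) (by omega) _ (by omega) e hq
      exact (mem_upTo I i e).2 ⟨c, by omega, hec⟩
    · rw [hyi i (by omega), List.head?_eq_getElem?]
      simp [s, htle i hi.le]
    · rw [hyi (i + 1) (by omega), List.getLast?_eq_getElem?, hslen]
      simp only [s, List.getElem?_take, List.getElem?_drop]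
      rw [if_pos (by omega), show t i + (t (i + 1) - t i + 1 - 1) = t (i + 1) by omega]
      exact List.getElem?_eq_getElem hl
    · intro e he
      obtain ⟨p, h1, h2, h3⟩ := hbetween i hi e he
      simp only [walkEdges, Multiset.mem_coe, hsE]
      refine List.mem_iff_getElem?.2 ⟨p - t i, ?_⟩
      rw [List.getElem?_take, if_pos (by omega), List.getElem?_drop,
        show t i + (p - t i) = p by omega, h3]
  have hyv : ∀ i < I.k, y i ∈ vertsOf (I.cls i) := by
    intro i hi
    have h1 := htlt i hi
    obtain ⟨⟨x, hx, hxi⟩, _⟩ := ht i hi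
    refine ⟨x, hxi, ?_⟩
    rw [hE, wel_getElem W (t i) (by omega)] at hx
    rw [← Option.some.inj hx, hyi i hi.le]
    simp
  refine ⟨y, s, ⟨?_, hyv 0 (by omega), ?_, fun i hi => ⟨s i, hsR i hi⟩⟩, hsR, ?_⟩
  · rw [hyi 0 (by omega), hyi I.k le_rfl]
    rw [List.head?_eq_getElem?, List.getLast?_eq_getElem?] at hcl
    rw [← Option.some_inj, ← List.getElem?_eq_getElem, ← List.getElem?_eq_getElem, ht0, htk, hlen,
      hcl]
  · intro i hi0 hi
    refine ⟨hyv i hi, ?_⟩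
    have hpos : 0 < t i := by
      have := hmono (i - 1) (by omega)
      rw [show i - 1 + 1 = i by omega] at this
      omega
    have h1 := htlt i hi
    have hx := wel_getElem W (t i - 1) (by omega)
    obtain ⟨c, hc, hxc⟩ := hbefore i hi.le (t i - 1) (by omega) _ hx
    refine ⟨c, hc, _, hxc, ?_⟩
    rw [hyi i hi.le]
    simp [show t i - 1 + 1 = t i by omega]
  · simp only [wWeight_eq, hsE]
    rw [sum_segments ω E t I.k ht0 (fun i hi => (hmono i hi).le), htk, List.take_length]


/-- Let `I` be a feasible HCPP(l) instance with classes `E_1 ≺ … ≺ E_k`, let `α ≥ 1`, and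
suppose that for every `u, v, i` for which `R[u,v,i]` has a solution we are given a
feasible solution `P̃[u,v,i]` of `R[u,v,i]` with `ω(P̃[u,v,i]) ≤ α·ω(P[u,v,i])`. Let `Γ̃`
be the layer graph whose arc `(u_i, v_{i+1})` has weight `ω(P̃[u,v,i])`. Then `Γ̃`
contains a layer path, and for any least-weight layer path `J` of `Γ̃`, the solution
`W_J` obtained by concatenating the walks `P̃[·,·,i]` along `J` is a feasible solution
for `I` with `ω(W_J) ≤ α·ω(W*)`, where `W*` is an optimal solution for `I`. -/
theorem layer_graph_approx {V : Type} [DecidableEq V] (I : HCPPl V) (ω : Sym2 V → ℕ)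
    (α : ℚ) (hα : 1 ≤ α)
    (hfeas : ∃ T : List V, Feasible I T)
    (Pt : V → V → ℕ → List V)
    (hPt : ∀ (u v : V) (i : ℕ), i < I.k → RFeas I u v i →
      RSol I u v i (Pt u v i) ∧ (wWeight ω (Pt u v i) : ℚ) ≤ α * (optR I ω u v i : ℚ)) :
    (∃ y : ℕ → V, IsLayerPath I y) ∧
    ∀ y : ℕ → V, IsLayerPath I y →
      (∀ y' : ℕ → V, IsLayerPath I y' → lpWeightApx I ω Pt y ≤ lpWeightApx I ω Pt y') →
      Feasible I (WJ I Pt y) ∧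
      ∀ W : List V, Feasible I W →
        (∀ W' : List V, Feasible I W' → wWeight ω W ≤ wWeight ω W') →
        (wWeight ω (WJ I Pt y) : ℚ) ≤ α * (wWeight ω W : ℚ) := by
  constructor
  · obtain ⟨T, hT⟩ := hfeas
    obtain ⟨y, _, hy, _⟩ := decompose I ω T hT
    exact ⟨y, hy⟩
  · intro y hy hmin
    obtain ⟨hF, hw⟩ := concat_feasible I ω Pt y hy.1
      (fun i hi => (hPt _ _ i hi (hy.2.2.2 i hi)).1)
    refine ⟨hF, ?_⟩
    intro W hW _
    obtain ⟨y', s, hy', hs, hsum⟩ := decompose I ω W hW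
    have h1 : (lpWeightApx I ω Pt y : ℚ) ≤ lpWeightApx I ω Pt y' := by
      exact_mod_cast hmin y' hy'
    rw [hw, ← hsum]
    refine h1.trans ?_
    simp only [lpWeightApx]
    push_cast
    rw [Finset.mul_sum]
    refine Finset.sum_le_sum fun i hi => ?_
    have hi := Finset.mem_range.1 hi
    refine (hPt _ _ i hi (hy'.2.2.2 i hi)).2.trans ?_
    have h2 : optR I ω (y' i) (y' (i + 1)) i ≤ wWeight ω (s i) :=
      Nat.sInf_le ⟨s i, hs i hi, rfl⟩
    have h3 : (optR I ω (y' i) (y' (i + 1)) i : ℚ) ≤ wWeight ω (s i) := by exact_mod_cast h2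
    exact mul_le_mul_of_nonneg_left h3 (by linarith)

end HCPPFormal
end

section
/- Let I=(G,ω,s,t,R) be an s-t-RPP instance in which G=(V,E) is the complete graph on V(R)∪{s,t} with s≠t and ω satisfies the triangle inequality. Let T ⊆ E be a set of edges of minimum total weight such that R∪T is a connected spanning subgraph of G, let S be the set of those vertices of V∖{s,t} that are imbalanced in ⟨G⟩(R∪T) together with those vertices of {s,t} that are balanced in ⟨G⟩(R∪T), let P* be an optimal solution for I, and let Q = E(P*) ⊎ R ⊎ T. Then there exist three perfect matchings M_1, M_2, M_3 on S in G with ω(M_1)+ω(M_2)+ω(M_3) ≤ ω(Q); consequently, a minimum-weight perfect matching M on S satisfies ω(M) ≤ ω(Q)/3 ≤ (2/3)·ω(P*). -/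
namespace HCPPFormal

variable {V : Type} [DecidableEq V]

/-- The edge set of the complete graph on the (finite) vertex type `V`. -/
def completeEdges (V : Type) [Fintype V] [DecidableEq V] : Finset (Sym2 V) :=
  Finset.univ.filter fun e => ¬ e.IsDiag

/-- A feasible solution of the s-t-RPP instance `(G, ω, s, t, R)` with edge set `E`:
a walk from `s` to `t` in `G` traversing every edge of `R` at least once. -/
def STSol (E R : Finset (Sym2 V)) (s t : V) (w : List V) : Prop :=
  w ≠ [] ∧ w.Chain' (fun a b => s(a, b) ∈ E) ∧
  w.head? = some s ∧ w.getLast? = some t ∧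
  ∀ e ∈ R, e ∈ walkEdges w

/-- A feasible solution of the RPP instance with edge set `E` and required edges `R`:
a closed walk traversing every edge of `R` at least once. -/
def RPPSol (E R : Finset (Sym2 V)) (w : List V) : Prop :=
  w ≠ [] ∧ w.Chain' (fun a b => s(a, b) ∈ E) ∧
  w.head? = w.getLast? ∧
  ∀ e ∈ R, e ∈ walkEdges w

/-- The set `S` of those vertices outside `{s, t}` that are imbalanced in `⟨G⟩(R ∪ T)`
together with those vertices of `{s, t}` that are balanced in `⟨G⟩(R ∪ T)`. -/
def stS (R T : Finset (Sym2 V)) (s t : V) : Set V :=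
  {v | (v ≠ s ∧ v ≠ t ∧ ¬ Even (mDeg (R ∪ T).val v)) ∨
       ((v = s ∨ v = t) ∧ Even (mDeg (R ∪ T).val v))}


/-! ### Helper lemmas -/

/-- The degree parity. -/
def par (M : Multiset (Sym2 V)) (v : V) : ZMod 2 := (mDeg M v : ZMod 2)

/-- indicator -/
def dl (a v : V) : ZMod 2 := if v = a then 1 else 0

theorem z2 (x : ZMod 2) : x + x = 0 := CharTwo.add_self_eq_zero x

theorem par_zero (v : V) : par (0 : Multiset (Sym2 V)) v = 0 := by simp [par, mDeg]

theorem par_add (M N : Multiset (Sym2 V)) (v : V) : par (M + N) v = par M v + par N v := by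
  simp [par, mDeg]

theorem par_cons (a b : V) (M : Multiset (Sym2 V)) (v : V) :
    par (s(a, b) ::ₘ M) v = dl a v + dl b v + par M v := by
  have h : (mDeg (s(a, b) ::ₘ M) v) =
      (if v = a then 1 else 0) + (if v = b then 1 else 0) + mDeg M v := by
    simp only [mDeg, Multiset.map_cons, Multiset.sum_cons, Sym2.diag, Sym2.mem_iff]
    congr 1
    by_cases h1 : v = a <;> by_cases h2 : v = b <;> simp_all [Sym2.eq_iff, eq_comm]
  simp only [par, h, dl]
  push_cast
  rfl

theorem mWeight_add (ω : Sym2 V → ℕ) (M N : Multiset (Sym2 V)) :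
    mWeight ω (M + N) = mWeight ω M + mWeight ω N := by simp [mWeight]

theorem mWeight_cons (ω : Sym2 V → ℕ) (e) (N : Multiset (Sym2 V)) :
    mWeight ω (e ::ₘ N) = ω e + mWeight ω N := by simp [mWeight]

/-- If edges are pairwise disjoint non-loops, then parity is the membership indicator. -/
theorem par_of_disjoint (F : Multiset (Sym2 V)) (hl : ∀ e ∈ F, ¬ e.IsDiag)
    (hd : ∀ e e' F', F = e ::ₘ e' ::ₘ F' → ∀ v, v ∈ e → v ∉ e') (v : V) :
    (par F v = 1 ↔ v ∈ mVerts F) := by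
  constructor
  · intro h
    by_contra hn
    have : mDeg F v = 0 := by
      unfold mDeg
      apply Multiset.sum_eq_zero
      intro x hx
      obtain ⟨e, he, rfl⟩ := Multiset.mem_map.1 hx
      have hv : v ∉ e := fun h => hn ⟨e, he, h⟩
      have : e ≠ Sym2.diag v := by
        rintro rfl
        exact hl _ he (by simp [Sym2.diag])
      simp [hv, this]
    simp [par, this] at h
  · rintro ⟨e, he, hv⟩
    obtain ⟨F', rfl⟩ := Multiset.exists_cons_of_mem he
    have h0 : mDeg F' v = 0 := by
      unfold mDeg
      apply Multiset.sum_eq_zero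
      intro x hx
      obtain ⟨e', he', rfl⟩ := Multiset.mem_map.1 hx
      obtain ⟨F'', rfl⟩ := Multiset.exists_cons_of_mem he'
      have hv' : v ∉ e' := hd e e' F'' rfl v hv
      have : e' ≠ Sym2.diag v := by
        rintro rfl
        exact hl _ (Multiset.mem_cons_of_mem he') (by simp [Sym2.diag])
      simp [hv', this]
    have hne : e ≠ Sym2.diag v := by
      rintro rfl
      exact hl _ he (by simp [Sym2.diag])
    have : mDeg (e ::ₘ F') v = 1 := by
      have : mDeg (e ::ₘ F') v = 1 + mDeg F' v := by
        simp [mDeg, hne, hv]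
      omega
    simp [par, this]

theorem join_to_matching (ω : Sym2 V → ℕ)
    (htri : ∀ u v w : V, u ≠ v → v ≠ w → u ≠ w → ω s(u, w) ≤ ω s(u, v) + ω s(v, w))
    (U : Set V) (n : ℕ) : ∀ (F : Multiset (Sym2 V)), F.card = n →
    (∀ e ∈ F, ¬ e.IsDiag) → (∀ v, par F v = 1 ↔ v ∈ U) →
    ∃ M : Finset (Sym2 V), IsPerfectMatchingOn M.val U ∧ mWeight ω M.val ≤ mWeight ω F := by
  induction n using Nat.strong_induction_on with
  | _ n ih =>
  intro F hn hl hU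
  by_cases hd : ∀ e e' F', F = e ::ₘ e' ::ₘ F' → ∀ v, v ∈ e → v ∉ e'
  · have hnd : F.Nodup := by
      rw [Multiset.nodup_iff_ne_cons_cons]
      intro e F' h
      induction e using Sym2.ind with
      | _ a b => exact hd _ _ _ h a (by simp) (by simp)
    refine ⟨⟨F, hnd⟩, ⟨hnd, hl, ?_, ?_⟩, le_rfl⟩
    · intro e he e' he' hne v hv
      obtain ⟨F', rfl⟩ := Multiset.exists_cons_of_mem he
      have he2 : e' ∈ F' := by
        rcases Multiset.mem_cons.1 he' with h | h
        · exact absurd h.symm hne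
        · exact h
      obtain ⟨F'', rfl⟩ := Multiset.exists_cons_of_mem he2
      exact hd _ _ _ rfl v hv
    · ext v
      rw [← hU v, par_of_disjoint F hl hd v]
  · push Not at hd
    obtain ⟨e, e', F', rfl, b, hb, hb'⟩ := hd
    obtain ⟨a, rfl⟩ := hb
    obtain ⟨c, rfl⟩ := hb'
    have hab : b ≠ a := by
      have := hl s(b, a) (by simp)
      simpa using this
    have hbc : b ≠ c := by
      have := hl s(b, c) (by simp)
      simpa using this
    simp only [Multiset.card_cons] at hn
    by_cases hac : a = c
    · subst hac
      obtain ⟨M, hM, hw⟩ := ih F'.card (by omega) F' rfl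
        (fun e he => hl e (by simp [he])) (fun v => by
          rw [← hU v, par_cons, par_cons]
          have : dl b v + dl a v + (dl b v + dl a v + par F' v) = par F' v := by
            linear_combination z2 (dl b v) + z2 (dl a v)
          rw [this])
      exact ⟨M, hM, hw.trans (by simp only [mWeight_cons]; omega)⟩
    · obtain ⟨M, hM, hw⟩ := ih (F'.card + 1) (by omega) (s(a, c) ::ₘ F') (by simp)
        (fun e he => by
          rcases Multiset.mem_cons.1 he with rfl | h
          · simpa using hac
          · exact hl e (by simp [h])) (fun v => by
          rw [← hU v, par_cons, par_cons, par_cons]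
          have : dl b v + dl a v + (dl b v + dl c v + par F' v)
              = dl a v + dl c v + par F' v := by
            linear_combination z2 (dl b v)
          rw [this])
      refine ⟨M, hM, hw.trans ?_⟩
      simp only [mWeight_cons]
      have := htri a b c hab.symm hbc hac
      rw [Sym2.eq_swap (a := a) (b := b)] at this
      omega

theorem walkEdges_cons (a b : V) (l : List V) :
    walkEdges (a :: b :: l) = s(a, b) ::ₘ walkEdges (b :: l) := rfl

theorem par_walk (a t : V) (l : List V) (h : (a :: l).getLast? = some t) (v : V) :
    par (walkEdges (a :: l)) v = dl a v + dl t v := by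
  induction l generalizing a with
  | nil =>
    simp at h
    subst h
    rw [z2]
    exact par_zero v
  | cons b l ih =>
    rw [walkEdges_cons, par_cons, ih b (by simpa using h)]
    linear_combination z2 (dl b v)

theorem walk_split [Fintype V] (a : V) (l : List V) (f : V → ZMod 2)
    (hf : ∀ v, f v ≠ 0 → v ∈ a :: l) (hs : ∑ v, f v = 0) :
    ∃ A ≤ walkEdges (a :: l), ∀ v, par A v = f v := by
  induction l generalizing a f with
  | nil =>
    refine ⟨0, by simp, ?_⟩
    have h1 : ∀ v, v ≠ a → f v = 0 := fun v hv => by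
      by_contra h
      exact hv (by simpa using hf v h)
    have h2 : ∑ v, f v = f a := Finset.sum_eq_single a (fun v _ hv => h1 v hv) (by simp)
    intro v
    rw [par_zero]
    by_cases hv : v = a
    · rw [hv, ← h2, hs]
    · rw [h1 v hv]
  | cons b l ih =>
    obtain ⟨A, hA, hpar⟩ := ih b (fun v => f v + f a * (dl a v + dl b v)) (by
      intro v hv
      by_contra hn
      have hvb : v ≠ b := fun h => hn (by simp [h])
      apply hv
      by_cases hva : v = a
      · subst hva
        simp [dl, hvb, z2]
      · have : f v = 0 := by
          by_contra h
          have := hf v h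
          simp only [List.mem_cons] at this hn
          tauto
        simp [dl, hvb, hva, this]) (by
      have hd : ∀ c : V, ∑ v, dl c v = 1 := fun c => by simp [dl]
      rw [Finset.sum_add_distrib, hs, ← Finset.mul_sum, Finset.sum_add_distrib, hd, hd, z2]
      simp)
    rw [walkEdges_cons]
    have hfa : f a = 0 ∨ f a = 1 := by
      generalize f a = x
      revert x
      decide
    rcases hfa with h | h
    · exact ⟨A, hA.trans (Multiset.le_cons_self _ _), fun v => by rw [hpar, h]; ring⟩
    · refine ⟨s(a, b) ::ₘ A, Multiset.cons_le_cons _ hA, fun v => ?_⟩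
      rw [par_cons, hpar, h]
      linear_combination z2 (dl a v) + z2 (dl b v)

theorem par_sum [Fintype V] (M : Multiset (Sym2 V)) : ∑ v, par M v = 0 := by
  induction M using Multiset.induction_on with
  | empty => simp [par_zero]
  | cons e M ih =>
    induction e using Sym2.ind with
    | _ a b =>
      have hd : ∀ c : V, ∑ v, dl c v = 1 := fun c => by simp [dl]
      simp only [par_cons]
      rw [Finset.sum_add_distrib, Finset.sum_add_distrib, hd, hd, ih, z2, add_zero]

theorem path_in (J : Finset (Sym2 V)) (s t : V)
    (h : Relation.ReflTransGen (mAdj J.val) s t) :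
    ∃ C ⊆ J, ∀ v, par C.val v = dl s v + dl t v := by
  induction h with
  | refl => exact ⟨∅, by simp, fun v => by rw [z2]; exact par_zero v⟩
  | @tail b c _ hbc ih =>
    obtain ⟨C, hC, hp⟩ := ih
    have hbc' : s(b, c) ∈ J := hbc
    by_cases he : s(b, c) ∈ C
    · refine ⟨C.erase s(b, c), (Finset.erase_subset _ _).trans hC, fun v => ?_⟩
      have h1 : C.val = s(b, c) ::ₘ (C.erase s(b, c)).val := by
        rw [Finset.erase_val, Multiset.cons_erase he]
      have h2 := hp v
      rw [h1, par_cons] at h2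
      linear_combination h2 - z2 (dl c v)
    · refine ⟨insert s(b, c) C, Finset.insert_subset hbc' hC, fun v => ?_⟩
      rw [Finset.insert_val_of_notMem he, par_cons, hp]
      linear_combination z2 (dl b v)

theorem mem_of_walkEdge (w : List V) (e) (he : e ∈ walkEdges w) (v : V) (hv : v ∈ e) :
    v ∈ w := by
  match w, he with
  | [], he => simp [walkEdges, walkEdgeList] at he
  | [a], he => simp [walkEdges, walkEdgeList] at he
  | a :: b :: l, he =>
    rw [walkEdges_cons, Multiset.mem_cons] at he
    rcases he with rfl | he
    · rcases Sym2.mem_iff.1 hv with rfl | rfl <;> simp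
    · exact List.mem_cons_of_mem _ (mem_of_walkEdge (b :: l) e he v hv)

theorem walk_sub (E : Finset (Sym2 V)) (w : List V)
    (h : w.IsChain (fun a b => s(a, b) ∈ E)) : ∀ e ∈ walkEdges w, e ∈ E := by
  match w, h with
  | [], h => simp [walkEdges, walkEdgeList]
  | [a], h => simp [walkEdges, walkEdgeList]
  | a :: b :: l, h =>
    intro e he
    rw [walkEdges_cons, Multiset.mem_cons] at he
    rw [List.isChain_cons_cons] at h
    rcases he with rfl | he
    · exact h.1
    · exact walk_sub E (b :: l) h.2 e he

theorem walk_reach (M : Multiset (Sym2 V)) (a : V) (l : List V)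
    (h : ∀ e ∈ walkEdges (a :: l), e ∈ M) :
    ∀ u ∈ a :: l, Relation.ReflTransGen (mAdj M) a u := by
  induction l generalizing a with
  | nil =>
    intro u hu
    simp only [List.mem_singleton] at hu
    subst hu
    exact .refl
  | cons b l ih =>
    intro u hu
    rcases List.mem_cons.1 hu with rfl | hu
    · exact .refl
    · rw [walkEdges_cons] at h
      exact .head (h _ (by simp)) (ih b (fun e he => h e (by simp [he])) u hu)

theorem walk_cover (a b : V) (l : List V) :
    ∀ u ∈ a :: b :: l, ∃ e ∈ walkEdges (a :: b :: l), u ∈ e := by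
  induction l generalizing a b with
  | nil =>
    intro u hu
    exact ⟨s(a, b), by simp [walkEdges_cons], by simpa using hu⟩
  | cons c l ih =>
    intro u hu
    rcases List.mem_cons.1 hu with rfl | hu
    · exact ⟨s(u, b), by simp [walkEdges_cons], by simp⟩
    · obtain ⟨e, he, hu⟩ := ih b c u hu
      exact ⟨e, by rw [walkEdges_cons]; exact Multiset.mem_cons_of_mem he, hu⟩

theorem mWeight_mono (ω : Sym2 V → ℕ) {M N : Multiset (Sym2 V)} (h : M ≤ N) :
    mWeight ω M ≤ mWeight ω N := by
  obtain ⟨K, rfl⟩ := Multiset.le_iff_exists_add.1 h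
  rw [mWeight_add]
  omega

theorem mem_stS (R T : Finset (Sym2 V)) (s t : V) (hst : s ≠ t) (v : V) :
    par (R ∪ T).val v + (dl s v + dl t v) = 1 ↔ v ∈ stS R T s t := by
  have hev : ∀ n : ℕ, ((n : ZMod 2) = 0 ↔ Even n) := fun n => ZMod.natCast_eq_zero_iff_even
  have hz : ∀ x : ZMod 2, x + 1 = 1 ↔ x = 0 := by decide
  have hz' : ∀ x : ZMod 2, x = 1 ↔ ¬ x = 0 := by decide
  unfold stS par
  rw [Set.mem_setOf_eq, ← hev]
  by_cases h1 : v = s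
  · subst h1
    simp [dl, hst]
  · by_cases h2 : v = t
    · subst h2
      simp [dl, h1]
    · simp [dl, h1, h2, ← hz']

/-- Let `I = (G, ω, s, t, R)` be an s-t-RPP instance in which `G = (V, E)` is the complete
graph on `V(R) ∪ {s, t}` with `s ≠ t` and `ω` satisfies the triangle inequality. Let
`T ⊆ E` be a set of edges of minimum total weight such that `R ∪ T` is a connected
spanning subgraph of `G`, let `S` be the set of those vertices of `V ∖ {s,t}` that are
imbalanced in `⟨G⟩(R ∪ T)` together with those vertices of `{s, t}` that are balanced
in `⟨G⟩(R ∪ T)`, let `P*` be an optimal solution for `I`, and let `Q = E(P*) ⊎ R ⊎ T`.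
Then there exist three perfect matchings `M₁, M₂, M₃` on `S` in `G` with
`ω(M₁) + ω(M₂) + ω(M₃) ≤ ω(Q)`; consequently, a minimum-weight perfect matching `M`
on `S` satisfies `ω(M) ≤ ω(Q)/3 ≤ (2/3)·ω(P*)`. -/
theorem three_matchings_bound {V : Type} [Fintype V] [DecidableEq V]
    (R T : Finset (Sym2 V)) (ω : Sym2 V → ℕ) (s t : V) (hst : s ≠ t)
    (hR : R ⊆ completeEdges V) (hT : T ⊆ completeEdges V)
    (hcov : ∀ v : V, v = s ∨ v = t ∨ ∃ e ∈ R, v ∈ e)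
    (htri : ∀ u v w : V, u ≠ v → v ≠ w → u ≠ w → ω s(u, w) ≤ ω s(u, v) + ω s(v, w))
    (hconn : mConnected (R ∪ T).val)
    (hspan : ∀ v : V, v ∈ mVerts (R ∪ T).val)
    (hTmin : ∀ T' : Finset (Sym2 V), T' ⊆ completeEdges V →
      mConnected (R ∪ T').val → (∀ v : V, v ∈ mVerts (R ∪ T').val) →
      mWeight ω T.val ≤ mWeight ω T'.val)
    (Pw : List V) (hPw : STSol (completeEdges V) R s t Pw)
    (hPopt : ∀ w : List V, STSol (completeEdges V) R s t w → wWeight ω Pw ≤ wWeight ω w) :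
    (∃ M₁ M₂ M₃ : Finset (Sym2 V),
      IsPerfectMatchingOn M₁.val (stS R T s t) ∧
      IsPerfectMatchingOn M₂.val (stS R T s t) ∧
      IsPerfectMatchingOn M₃.val (stS R T s t) ∧
      mWeight ω M₁.val + mWeight ω M₂.val + mWeight ω M₃.val ≤
        mWeight ω (walkEdges Pw + R.val + T.val)) ∧
    ∀ M : Finset (Sym2 V), IsPerfectMatchingOn M.val (stS R T s t) →
      (∀ M' : Finset (Sym2 V), IsPerfectMatchingOn M'.val (stS R T s t) →
        mWeight ω M.val ≤ mWeight ω M'.val) →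
      (mWeight ω M.val : ℚ) ≤ (mWeight ω (walkEdges Pw + R.val + T.val) : ℚ) / 3 ∧
      (mWeight ω (walkEdges Pw + R.val + T.val) : ℚ) / 3 ≤ 2 / 3 * (wWeight ω Pw : ℚ) := by
  have hloop : ∀ e ∈ completeEdges V, ¬ e.IsDiag := fun e he => (Finset.mem_filter.1 he).2
  obtain ⟨hne, hch, hhd, hlast, hRP⟩ := hPw
  obtain ⟨l, rfl⟩ : ∃ l, Pw = s :: l := by
    cases Pw with
    | nil => exact absurd rfl hne
    | cons a l => exact ⟨l, by simpa using hhd⟩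
  have hsub := walk_sub _ _ hch
  have htmem : t ∈ s :: l := List.mem_of_getLast? hlast
  have hall : ∀ v : V, v ∈ s :: l := by
    intro v
    rcases hcov v with rfl | rfl | ⟨e, he, hv⟩
    · simp
    · exact htmem
    · exact mem_of_walkEdge _ e (hRP e he) v hv
  have hJ : R ∪ T ⊆ completeEdges V := Finset.union_subset hR hT
  have hJw : mWeight ω (R ∪ T).val ≤ mWeight ω R.val + mWeight ω T.val := by
    have := Finset.sum_union_inter (s₁ := R) (s₂ := T) (f := ω)
    change ∑ e ∈ R ∪ T, ω e ≤ ∑ e ∈ R, ω e + ∑ e ∈ T, ω e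
    omega
  have hex : ∃ M₁ M₂ M₃ : Finset (Sym2 V),
      IsPerfectMatchingOn M₁.val (stS R T s t) ∧
      IsPerfectMatchingOn M₂.val (stS R T s t) ∧
      IsPerfectMatchingOn M₃.val (stS R T s t) ∧
      mWeight ω M₁.val + mWeight ω M₂.val + mWeight ω M₃.val ≤
        mWeight ω (walkEdges (s :: l) + R.val + T.val) := by
    obtain ⟨A, hA, hpA⟩ := walk_split s l
      (fun v => par (R ∪ T).val v + (dl s v + dl t v)) (fun v _ => hall v) (by
        have hd : ∀ c : V, ∑ v, dl c v = 1 := fun c => by simp [dl]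
        rw [Finset.sum_add_distrib, par_sum, Finset.sum_add_distrib, hd, hd, z2, add_zero])
    obtain ⟨B, hB⟩ := Multiset.le_iff_exists_add.1 hA
    obtain ⟨C, hC, hpC⟩ := path_in (R ∪ T) s t (hconn s (hspan s) t (hspan t))
    obtain ⟨D, hD⟩ := Multiset.le_iff_exists_add.1 (Finset.val_le_iff.2 hC)
    have hpP := fun v => par_walk s t l hlast v
    have hmS := mem_stS R T s t hst
    obtain ⟨M₁, h1, w1⟩ := join_to_matching ω htri (stS R T s t) _ A rfl
      (fun e he => hloop e (hsub e (Multiset.mem_of_le hA he)))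
      (fun v => by rw [hpA]; exact hmS v)
    obtain ⟨M₂, h2, w2⟩ := join_to_matching ω htri (stS R T s t) _ D rfl
      (fun e he => hloop e (hJ (by
        rw [← Finset.mem_val, hD]
        exact Multiset.mem_add.2 (Or.inr he))))
      (fun v => by
        rw [← hmS v, hD, par_add, hpC]
        have : dl s v + dl t v + par D v + (dl s v + dl t v) = par D v := by
          linear_combination z2 (dl s v) + z2 (dl t v)
        rw [this])
    obtain ⟨M₃, h3, w3⟩ := join_to_matching ω htri (stS R T s t) _ (B + C.val) rfl
      (fun e he => by
        rcases Multiset.mem_add.1 he with he | he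
        · exact hloop e (hsub e (by rw [hB]; exact Multiset.mem_add.2 (Or.inr he)))
        · exact hloop e (hJ (hC he)))
      (fun v => by
        rw [← hmS v, par_add, hpC]
        have h4 := hpP v
        rw [hB, par_add, hpA] at h4
        have : par B v = par (R ∪ T).val v := by
          linear_combination h4 - z2 (par (R ∪ T).val v) + z2 (par (R ∪ T).val v)
            - z2 (par (R ∪ T).val v)
        rw [this])
    refine ⟨M₁, M₂, M₃, h1, h2, h3, ?_⟩
    have e1 := congrArg (mWeight ω) hB
    have e2 := congrArg (mWeight ω) hD
    rw [mWeight_add] at e1 e2 w3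
    rw [mWeight_add, mWeight_add]
    omega
  refine ⟨hex, fun M hM hMmin => ⟨?_, ?_⟩⟩
  · obtain ⟨M₁, M₂, M₃, h1, h2, h3, hw⟩ := hex
    have a1 := hMmin _ h1
    have a2 := hMmin _ h2
    have a3 := hMmin _ h3
    have : 3 * mWeight ω M.val ≤ mWeight ω (walkEdges (s :: l) + R.val + T.val) := by omega
    have h' : (3 : ℚ) * mWeight ω M.val ≤ mWeight ω (walkEdges (s :: l) + R.val + T.val) := by
      exact_mod_cast this
    linarith
  · obtain ⟨b, l, rfl⟩ : ∃ b l', l = b :: l' := by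
      cases l with
      | nil => exact absurd (by simpa using hlast) hst
      | cons b l => exact ⟨b, l, rfl⟩
    set W := (walkEdges (s :: b :: l)).toFinset with hW
    have hRW : R ⊆ W := fun e he => Multiset.mem_toFinset.2 (hRP e he)
    have hun : R ∪ (W \ R) = W := Finset.union_sdiff_of_subset hRW
    have hT' := hTmin (W \ R)
      (fun e he => hsub e (Multiset.mem_toFinset.1 (Finset.mem_sdiff.1 he).1))
      (by
        rw [hun]
        intro u _ v _
        have hr := walk_reach W.val s (b :: l) (fun e he => Multiset.mem_toFinset.2 he)
        have hsymm : Std.Symm (mAdj W.val) := ⟨fun x y h => by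
          unfold mAdj at h ⊢
          rwa [Sym2.eq_swap]⟩
        exact (Relation.ReflTransGen.stdSymm.symm _ _ (hr u (hall u))).trans (hr v (hall v)))
      (by
        rw [hun]
        intro v
        obtain ⟨e, he, hv⟩ := walk_cover s b l v (hall v)
        exact ⟨e, Multiset.mem_toFinset.2 he, hv⟩)
    have hWw : mWeight ω W.val ≤ mWeight ω (walkEdges (s :: b :: l)) :=
      mWeight_mono ω (Multiset.dedup_le _)
    have hsd : mWeight ω (W \ R).val + mWeight ω R.val = mWeight ω W.val :=
      Finset.sum_sdiff hRW
    have : mWeight ω (walkEdges (s :: b :: l) + R.val + T.val)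
        ≤ 2 * wWeight ω (s :: b :: l) := by
      rw [mWeight_add, mWeight_add, wWeight]
      omega
    have h' : (mWeight ω (walkEdges (s :: b :: l) + R.val + T.val) : ℚ)
        ≤ 2 * wWeight ω (s :: b :: l) := by exact_mod_cast this
    linarith

end HCPPFormal
end
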